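/- arXiv:math/9903189 — 3 statements merged into one kernel-verified Lean document; each statement's English description precedes it below -/
import Mathlib

section
/- Let V = V₁ ⊕ V₂ be a real Banach space decomposed as a topological direct sum of two closed subspaces with dim V₂ < ∞, let e ∈ V₁ with ‖e‖ = 1, and let 0 < ρ < R₁ and R₂ > 0. Set S = {u ∈ V₁ : ‖u‖ = ρ}, Q = {s e + u₂ : 0 ≤ s ≤ R₁, u₂ ∈ V₂, ‖u₂‖ ≤ R₂}, and ∂Q = {s e + u₂ ∈ Q : s ∈ {0, R₁} or ‖u₂‖ = R₂}. Then S and ∂Q link: S ∩ ∂Q = ∅, and for every continuous map γ : V → V with γ(x) = x for all x ∈ ∂Q, one has γ(Q) ∩ S ≠ ∅. -/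
open Set Filter

lemma gmp_poly {n : ℕ} (A : EuclideanSpace ℝ (Fin n) →L[ℝ] EuclideanSpace ℝ (Fin n)) :
    ∃ p : Polynomial ℝ, p.natDegree ≤ n ∧
      ∀ t : ℝ, p.eval t = (ContinuousLinearMap.id ℝ _ + t • A).det := by
  classical
  let b := (EuclideanSpace.basisFun (Fin n) ℝ).toBasis
  let M := LinearMap.toMatrix b b A.toLinearMap
  refine ⟨_, (Polynomial.natDegree_det_X_add_C_le M 1).trans (by simp), fun t => ?_⟩
  have h1 : (ContinuousLinearMap.id ℝ _ + t • A).det = (1 + t • M).det := by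
    rw [ContinuousLinearMap.det, ← LinearMap.det_toMatrix b]
    congr 1
    have : ((ContinuousLinearMap.id ℝ (EuclideanSpace ℝ (Fin n)) + t • A : EuclideanSpace ℝ (Fin n) →L[ℝ] EuclideanSpace ℝ (Fin n)) : EuclideanSpace ℝ (Fin n) →ₗ[ℝ] EuclideanSpace ℝ (Fin n)) = 1 + t • A.toLinearMap := by
      ext; simp
    rw [this, map_add, map_smul, LinearMap.toMatrix_one]
  rw [h1, ← Polynomial.coe_evalRingHom, RingHom.map_det]
  congr 1
  ext i j
  by_cases hij : i = j
  · subst hij; simp; ring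
  · simp [hij]; ring

/-- interpolation weights -/
lemma gmp_weights (n : ℕ) (τ : ℝ) (hτ : 0 < τ) :
    ∃ (s : Finset ℝ) (w : ℝ → ℝ), (∀ t ∈ s, 0 < t ∧ t < τ) ∧ ∑ t ∈ s, w t = 1 ∧
      ∀ p : Polynomial ℝ, p.natDegree ≤ n → p.eval 1 = ∑ t ∈ s, w t * p.eval t := by
  classical
  obtain ⟨s, hs, hc⟩ := (Set.Ioo_infinite hτ).exists_subset_card_eq (n + 1)
  have hinj : Set.InjOn (id : ℝ → ℝ) s := Function.injective_id.injOn
  refine ⟨s, fun t => (Lagrange.basis s id t).eval 1, fun t ht => hs ht, ?_, ?_⟩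
  · have hne : s.Nonempty := by rw [← Finset.card_pos]; omega
    have := congrArg (Polynomial.eval (1 : ℝ)) (Lagrange.sum_basis hinj hne)
    simpa [Polynomial.eval_finsetSum] using this
  · intro p hp
    have hd : p.degree < s.card := by
      rw [hc]
      exact lt_of_le_of_lt Polynomial.degree_le_natDegree (by exact_mod_cast Nat.lt_succ_of_le hp)
    have := congrArg (Polynomial.eval (1 : ℝ)) (Lagrange.eq_interpolate hinj hd)
    rw [this, Lagrange.interpolate_apply, Polynomial.eval_finsetSum]
    refine Finset.sum_congr rfl fun t _ => ?_
    simp [mul_comm]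

lemma gmp_ext_lip {E : Type*} [NormedAddCommGroup E] [NormedSpace ℝ E] (R : ℝ) (K : NNReal)
    (g : E → E) (hg : LipschitzOnWith K g (Metric.closedBall 0 R))
    (h0 : ∀ x, ‖x‖ = R → g x = 0) :
    LipschitzWith K (Set.indicator (Metric.closedBall (0 : E) R) g) := by
  classical
  have key : ∀ x y : E, ‖x‖ ≤ R → R < ‖y‖ → ‖g x‖ ≤ K * ‖x - y‖ := by
    intro x y hx hy
    have hc : ContinuousOn (fun t : ℝ => ‖x + t • (y - x)‖) (Icc 0 1) := by fun_prop
    obtain ⟨t, ht, hz⟩ := intermediate_value_Icc (zero_le_one' ℝ) hc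
      (show R ∈ Icc _ _ by simp; exact ⟨hx, hy.le⟩)
    simp only at hz
    have h := hg.dist_le_mul x (by simpa using hx) (x + t • (y - x)) (by simp [hz])
    rw [h0 _ hz, dist_zero_right, dist_eq_norm] at h
    refine h.trans (mul_le_mul_of_nonneg_left ?_ K.2)
    have : x - (x + t • (y - x)) = t • (x - y) := by rw [smul_sub, smul_sub]; abel
    rw [this, norm_smul, Real.norm_of_nonneg ht.1]
    exact mul_le_of_le_one_left (norm_nonneg _) ht.2
  refine LipschitzWith.of_dist_le_mul fun x y => ?_
  by_cases hx : ‖x‖ ≤ R <;> by_cases hy : ‖y‖ ≤ R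
  · simpa [Set.indicator, hx, hy] using hg.dist_le_mul x (by simpa using hx) y (by simpa using hy)
  · have := key x y hx (not_le.1 hy)
    simpa [Set.indicator, hx, hy, dist_eq_norm] using this
  · have := key y x hy (not_le.1 hx)
    rw [norm_sub_rev] at this
    simpa [Set.indicator, hx, hy, dist_eq_norm] using this
  · simp [Set.indicator, hx, hy]; positivity

lemma gmp_no_retract {n : ℕ} (R : ℝ) (hR : 0 < R)
    (r : EuclideanSpace ℝ (Fin n) → EuclideanSpace ℝ (Fin n)) (hr : ContDiff ℝ 1 r)
    (hn : ∀ x, ‖r x‖ = R) (hfix : ∀ x, ‖x‖ = R → r x = x) : False := by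
  let E := EuclideanSpace ℝ (Fin n)
  let B : Set E := Metric.closedBall 0 R
  let g : E → E := fun x => r x - x
  have hg : ContDiff ℝ 1 g := hr.sub contDiff_id
  have hAc : Continuous (fderiv ℝ g) := hg.continuous_fderiv (by norm_num)
  have hgd : ∀ x, DifferentiableAt ℝ g x := fun x => hg.differentiable (by norm_num) x
  have hBc : IsCompact B := isCompact_closedBall 0 R
  obtain ⟨C, hC⟩ := hBc.exists_bound_of_continuousOn hAc.continuousOn
  let K : NNReal := Real.toNNReal (max C 1)
  have hK : (K : ℝ) = max C 1 := Real.coe_toNNReal _ (by positivity)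
  have hK1 : 1 ≤ (K : ℝ) := by rw [hK]; exact le_max_right _ _
  have hAK : ∀ x ∈ B, ‖fderiv ℝ g x‖ ≤ K := fun x hx => by
    rw [hK]; exact (hC x hx).trans (le_max_left _ _)
  have hlip : LipschitzOnWith K g B :=
    Convex.lipschitzOnWith_of_nnnorm_fderiv_le (𝕜 := ℝ) (fun x _ => hgd x)
      (fun x hx => hAK x hx) (convex_closedBall 0 R)
  have hlip0 := gmp_ext_lip R K g hlip (fun x hx => by simp [g, hfix x hx])
  -- determinant positive near identity
  obtain ⟨δ, hδ, hdet⟩ : ∃ δ > 0, ∀ M : E →L[ℝ] E,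
      dist M (ContinuousLinearMap.id ℝ E) < δ → 0 < M.det := by
    have h1 : (0 : ℝ) < (ContinuousLinearMap.id ℝ E).det := by
      simp [ContinuousLinearMap.det]
    have := (ContinuousLinearMap.continuous_det (𝕜 := ℝ) (E := E)).continuousAt.eventually_const_lt h1
    obtain ⟨δ, hδ, h⟩ := Metric.eventually_nhds_iff.1 this
    exact ⟨δ, hδ, fun M hM => h hM⟩
  let τ : ℝ := min 1 δ / K
  have hτ : 0 < τ := by positivity
  let I : ℝ → ℝ := fun t => ∫ x in B, (ContinuousLinearMap.id ℝ E + t • fderiv ℝ g x).det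
  have hint : ∀ t : ℝ, MeasureTheory.IntegrableOn
      (fun x => (ContinuousLinearMap.id ℝ E + t • fderiv ℝ g x).det) B := fun t => by
    apply ContinuousOn.integrableOn_compact hBc
    exact (ContinuousLinearMap.continuous_det.comp
      (continuous_const.add (hAc.const_smul t))).continuousOn
  have hI : ∀ t, 0 < t → t < τ → I t = MeasureTheory.volume.real B := by
    intro t ht0 ht
    have htK' : t * K < min 1 δ := (lt_div_iff₀ (by positivity)).1 ht
    have htK : t * K < 1 := htK'.trans_le (min_le_left _ _)
    have htδ : t * K < δ := htK'.trans_le (min_le_right _ _)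
    have ht1 : t < 1 := by nlinarith
    let f : E → E := fun x => x + t • g x
    have hinj : InjOn f B := by
      intro x hx y hy hxy
      have h1 : x - y = t • (g y - g x) := by
        have : x + t • g x = y + t • g y := hxy
        rw [smul_sub, sub_eq_sub_iff_add_eq_add, this]; abel
      have h2 := hlip.dist_le_mul y hy x hx
      have h3 : ‖x - y‖ ≤ t * (K * ‖x - y‖) := by
        calc ‖x - y‖ = t * ‖g y - g x‖ := by
              rw [h1, norm_smul, Real.norm_of_nonneg ht0.le]
          _ ≤ _ := by
              rw [dist_eq_norm, dist_eq_norm, norm_sub_rev y x] at h2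
              exact mul_le_mul_of_nonneg_left h2 ht0.le
      have h4 : ‖x - y‖ = 0 := by nlinarith [norm_nonneg (x - y)]
      exact sub_eq_zero.1 (norm_eq_zero.1 h4)
    have himg : f '' B = B := by
      apply Subset.antisymm
      · rintro _ ⟨x, hx, rfl⟩
        have hx' : ‖x‖ ≤ R := by simpa [B] using hx
        have : f x = (1 - t) • x + t • r x := by
          simp only [f, g]; module
        rw [this]
        simp only [B, mem_closedBall_zero_iff]
        calc _ ≤ ‖(1 - t) • x‖ + ‖t • r x‖ := norm_add_le _ _
          _ = (1 - t) * ‖x‖ + t * R := by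
            rw [norm_smul, norm_smul, hn, Real.norm_of_nonneg ht0.le,
              Real.norm_of_nonneg (by linarith)]
          _ ≤ R := by nlinarith
      · intro y hy
        let tn : NNReal := ⟨t, ht0.le⟩
        have hcon : ContractingWith (tn * K)
            (fun x : E => y - t • Set.indicator B g x) := by
          refine ⟨by rw [← NNReal.coe_lt_coe]; exact htK, ?_⟩
          refine LipschitzWith.of_dist_le_mul fun x z => ?_
          rw [dist_sub_left, dist_smul₀, Real.norm_of_nonneg ht0.le]
          have := hlip0.dist_le_mul x z
          calc _ ≤ t * (K * dist x z) := mul_le_mul_of_nonneg_left this ht0.le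
            _ = _ := by rw [NNReal.coe_mul]; rw [show (tn : ℝ) = t from rfl]; ring
        have hfp := hcon.fixedPoint_isFixedPt
        set x := ContractingWith.fixedPoint _ hcon
        have hx : y - t • Set.indicator B g x = x := hfp
        have hxB : x ∈ B := by
          by_contra hxB
          rw [Set.indicator_of_notMem hxB, smul_zero, sub_zero] at hx
          exact hxB (hx ▸ hy)
        rw [Set.indicator_of_mem hxB] at hx
        exact ⟨x, hxB, (sub_eq_iff_eq_add.1 hx).symm⟩
    have hcv := MeasureTheory.integral_image_eq_integral_abs_det_fderiv_smul
      (MeasureTheory.volume : MeasureTheory.Measure E) (s := B) (f := f)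
      (f' := fun x => ContinuousLinearMap.id ℝ E + t • fderiv ℝ g x)
      hBc.measurableSet
      (fun x _ => ((hasFDerivAt_id x).add ((hgd x).hasFDerivAt.const_smul t)).hasFDerivWithinAt)
      hinj (fun _ => (1 : ℝ))
    rw [himg] at hcv
    have hpos : ∫ x in B, |(ContinuousLinearMap.id ℝ E + t • fderiv ℝ g x).det| • (1 : ℝ) = I t := by
      apply MeasureTheory.setIntegral_congr_fun hBc.measurableSet
      intro x hx
      simp only [smul_eq_mul, mul_one]
      apply abs_of_pos
      apply hdet
      rw [dist_eq_norm, add_sub_cancel_left, norm_smul, Real.norm_of_nonneg ht0.le]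
      exact (mul_le_mul_of_nonneg_left (hAK x hx) ht0.le).trans_lt htδ
    rw [hpos] at hcv
    rw [← hcv]; simp
  obtain ⟨s, w, hs, hw, hp⟩ := gmp_weights n τ hτ
  have hI1 : I 1 = MeasureTheory.volume.real B := by
    have : ∀ x, (ContinuousLinearMap.id ℝ E + (1 : ℝ) • fderiv ℝ g x).det =
        ∑ t ∈ s, w t * (ContinuousLinearMap.id ℝ E + t • fderiv ℝ g x).det := by
      intro x
      obtain ⟨p, hpd, hpe⟩ := gmp_poly (fderiv ℝ g x)
      rw [← hpe 1, hp p hpd]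
      exact Finset.sum_congr rfl fun t _ => by rw [hpe t]
    calc I 1 = ∫ x in B, ∑ t ∈ s, w t * (ContinuousLinearMap.id ℝ E + t • fderiv ℝ g x).det := by
          simp only [I]; exact MeasureTheory.integral_congr_ae (Eventually.of_forall this)
      _ = ∑ t ∈ s, w t * I t := by
          rw [MeasureTheory.integral_finsetSum _ (fun t _ => (hint t).const_mul (w t))]
          exact Finset.sum_congr rfl fun t _ => MeasureTheory.integral_const_mul _ _
      _ = ∑ t ∈ s, w t * MeasureTheory.volume.real B :=
          Finset.sum_congr rfl fun t ht => by rw [hI t (hs t ht).1 (hs t ht).2]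
      _ = _ := by rw [← Finset.sum_mul, hw, one_mul]
  have hI0 : I 1 = 0 := by
    apply MeasureTheory.integral_eq_zero_of_ae
    refine Eventually.of_forall fun x => ?_
    have hrd : HasFDerivAt r (ContinuousLinearMap.id ℝ E + (1 : ℝ) • fderiv ℝ g x) x := by
      have := (hasFDerivAt_id x).add ((hgd x).hasFDerivAt.const_smul (1 : ℝ))
      refine this.congr_of_eventuallyEq (Eventually.of_forall fun y => ?_)
      simp [g]
    set A := ContinuousLinearMap.id ℝ E + (1 : ℝ) • fderiv ℝ g x
    by_contra hne
    have hne : A.det ≠ 0 := hne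
    obtain ⟨v, hv⟩ := (LinearMap.equivOfDetNeZero A.toLinearMap hne).surjective (r x)
    have hv : A v = r x := hv
    have h1 := hrd.norm_sq
    have h2 : HasFDerivAt (fun y => ‖r y‖ ^ 2) (0 : E →L[ℝ] ℝ) x := by
      simp only [hn]; exact hasFDerivAt_const _ _
    have h3 := congrArg (fun L : E →L[ℝ] ℝ => L v) (h1.unique h2)
    simp [hv] at h3
    have := hn x
    rw [h3] at this
    simp at this
    exact hR.ne this
  have hvol : 0 < MeasureTheory.volume.real B :=
    ENNReal.toReal_pos (Metric.measure_closedBall_pos _ _ hR).ne' hBc.measure_lt_top.ne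
  linarith

lemma gmp_zero_euclid {n : ℕ} (R : ℝ) (hR : 0 < R)
    (g : EuclideanSpace ℝ (Fin n) → EuclideanSpace ℝ (Fin n)) (hg : Continuous g)
    (h0 : ∀ x, R ≤ ‖x‖ → g x = 0) : ∃ x, x + g x = 0 := by
  by_contra! hne
  obtain ⟨g', hg', happ, hsupp⟩ := hg.exists_contDiff_approx 1
    (ε := fun x => ‖x + g x‖) (by fun_prop) (fun x => norm_pos_iff.2 (hne x))
  have hne' : ∀ x, x + g' x ≠ 0 := by
    intro x hx
    have h1 := happ x
    have h2 : x + g x = g x - g' x := by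
      have h3 := eq_neg_of_add_eq_zero_right hx
      rw [h3]; abel
    rw [h2, dist_comm, dist_eq_norm] at h1
    exact lt_irrefl _ h1
  have hg1 : ContDiff ℝ 1 g' := hg'
  have hf : ContDiff ℝ 1 (fun x => x + g' x) := contDiff_id.add hg1
  refine gmp_no_retract R hR (fun x => (R / ‖x + g' x‖) • (x + g' x)) ?_ ?_ ?_
  · exact (contDiff_const.div (hf.norm ℝ hne') (fun x => norm_ne_zero_iff.2 (hne' x))).smul hf
  · intro x
    have := norm_pos_iff.2 (hne' x)
    rw [norm_smul, Real.norm_of_nonneg (by positivity)]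
    field_simp
  · intro x hx
    have : g' x = 0 := by
      by_contra h
      exact hsupp h (h0 x hx.ge)
    simp [this, hx, hR.ne']

lemma gmp_surj {W : Type*} [NormedAddCommGroup W] [NormedSpace ℝ W] [FiniteDimensional ℝ W]
    (K : Set W) (hK : IsCompact K) (g : W → W) (hg : Continuous g)
    (h0 : ∀ x, x ∉ K → g x = 0) (c : W) : ∃ x, x + g x = c := by
  let L := toEuclidean (E := W)
  have hK' : IsCompact ((fun x => L (x - c)) '' K) := hK.image (by fun_prop)
  obtain ⟨C, hC⟩ := hK'.exists_bound_of_continuousOn (f := id) continuousOn_id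
  obtain ⟨y, hy⟩ := gmp_zero_euclid (max C 0 + 1) (by positivity)
    (fun y => L (g (L.symm y + c))) (by fun_prop) (by
      intro y hy
      rw [h0, map_zero]
      intro hmem
      have := hC y ⟨_, hmem, by simp⟩
      have := le_max_left C 0
      simp only [id] at *
      linarith)
  refine ⟨L.symm y + c, ?_⟩
  have := congrArg L.symm hy
  simp only [map_add, ContinuousLinearEquiv.symm_apply_apply, map_zero] at this
  rw [add_right_comm, this, zero_add]

/-- **Example 2: the generalized mountain pass geometry links.**
Let `V = V₁ ⊕ V₂` be a real Banach space, a topological direct sum of two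
closed subspaces with `dim V₂ < ∞`, let `e ∈ V₁` with `‖e‖ = 1`, and let
`0 < ρ < R₁`, `R₂ > 0`. With `S = {u ∈ V₁ : ‖u‖ = ρ}`,
`Q = {s•e + u₂ : 0 ≤ s ≤ R₁, u₂ ∈ V₂, ‖u₂‖ ≤ R₂}` and
`bQ = {s•e + u₂ ∈ Q : s ∈ {0, R₁} or ‖u₂‖ = R₂}`, the sets `S` and `bQ` link:
`S ∩ bQ = ∅` and every continuous `γ : V → V` fixing `bQ` satisfies
`γ(Q) ∩ S ≠ ∅`. -/
theorem generalized_mountain_pass_geometry_links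
    {V : Type*} [NormedAddCommGroup V] [NormedSpace ℝ V] [CompleteSpace V]
    (V₁ V₂ : Submodule ℝ V)
    (hV₁closed : IsClosed (V₁ : Set V)) (hV₂closed : IsClosed (V₂ : Set V))
    (hcompl : IsCompl V₁ V₂) (hfin : FiniteDimensional ℝ V₂)
    (e : V) (he₁ : e ∈ V₁) (he : ‖e‖ = 1)
    (ρ R₁ R₂ : ℝ) (hρ : 0 < ρ) (hρR₁ : ρ < R₁) (hR₂ : 0 < R₂) :
    (({ u : V | u ∈ V₁ ∧ ‖u‖ = ρ } : Set V) ∩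
      { x : V | ∃ s : ℝ, ∃ u₂ ∈ V₂, 0 ≤ s ∧ s ≤ R₁ ∧ ‖u₂‖ ≤ R₂ ∧
        (s = 0 ∨ s = R₁ ∨ ‖u₂‖ = R₂) ∧ x = s • e + u₂ } = ∅) ∧
    ∀ γ : V → V, Continuous γ →
      (∀ x ∈ { x : V | ∃ s : ℝ, ∃ u₂ ∈ V₂, 0 ≤ s ∧ s ≤ R₁ ∧ ‖u₂‖ ≤ R₂ ∧
          (s = 0 ∨ s = R₁ ∨ ‖u₂‖ = R₂) ∧ x = s • e + u₂ }, γ x = x) →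
      (γ '' { x : V | ∃ s : ℝ, ∃ u₂ ∈ V₂, 0 ≤ s ∧ s ≤ R₁ ∧ ‖u₂‖ ≤ R₂ ∧
          x = s • e + u₂ } ∩
        { u : V | u ∈ V₁ ∧ ‖u‖ = ρ }).Nonempty := by
  refine ⟨?_, ?_⟩
  · rw [Set.eq_empty_iff_forall_notMem]
    rintro x ⟨⟨hx1, hxn⟩, s, u, hu, hs0, hs1, -, hb, rfl⟩
    have hu1 : u ∈ V₁ := by
      have := V₁.sub_mem hx1 (V₁.smul_mem s he₁)
      simpa using this
    have hu0 : u = 0 := by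
      have : u ∈ V₁ ⊓ V₂ := ⟨hu1, hu⟩
      rw [hcompl.inf_eq_bot] at this
      simpa using this
    subst hu0
    rw [add_zero, norm_smul, he, mul_one, Real.norm_of_nonneg hs0] at hxn
    rcases hb with h | h | h
    · linarith
    · linarith
    · rw [norm_zero] at h; linarith
  · intro γ hγ hfix
    have htop : V₂.IsTopCompl V₁ := Submodule.IsCompl.isTopCompl_of_isClosed hcompl.symm hV₂closed hV₁closed
    let p : V →L[ℝ] V₂ := V₂.projectionOntoL V₁ htop
    have hp2 : ∀ u : V₂, p u = u := fun u => Submodule.projectionOntoL_apply_left htop u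
    have hp1 : ∀ v, p v = 0 ↔ v ∈ V₁ := fun v => Submodule.projectionOntoL_apply_eq_zero_iff htop
    let j : V₂ × ℝ → V := fun w => w.2 • e + (w.1 : V)
    have hj : Continuous j := by fun_prop
    let H : V₂ × ℝ → V₂ × ℝ := fun w => (p (γ (j w)), ‖γ (j w) - (p (γ (j w)) : V)‖)
    have hH : Continuous H := by fun_prop
    let φ : V₂ × ℝ → ℝ := fun w => max (max (-w.2) (w.2 - R₁)) (‖w.1‖ - R₂)
    have hφ : Continuous φ := by fun_prop
    have hφle : ∀ w, φ w ≤ 0 ↔ 0 ≤ w.2 ∧ w.2 ≤ R₁ ∧ ‖w.1‖ ≤ R₂ := by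
      intro w; simp [φ, and_assoc]
    have hbd : ∀ w, φ w = 0 → H w - w = 0 := by
      intro w hw
      obtain ⟨h1, h2, h3⟩ := (hφle w).1 hw.le
      have hb : w.2 = 0 ∨ w.2 = R₁ ∨ ‖(w.1 : V)‖ = R₂ := by
        by_contra! hcon
        obtain ⟨a, b, c⟩ := hcon
        have h1' := lt_of_le_of_ne h1 a.symm
        have h2' := lt_of_le_of_ne h2 b
        have h3' : ‖w.1‖ < R₂ := lt_of_le_of_ne h3 c
        have : φ w < 0 := by
          simp only [φ, max_lt_iff]
          exact ⟨⟨by linarith, by linarith⟩, by linarith⟩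
        linarith
      have hγj : γ (j w) = j w :=
        hfix _ ⟨w.2, w.1, w.1.2, h1, h2, h3, hb, rfl⟩
      have hpj : p (j w) = w.1 := by
        simp only [j, map_add, map_smul, hp2, (hp1 e).2 he₁, smul_zero, zero_add]
      rw [sub_eq_zero]
      refine Prod.ext ?_ ?_
      · simp only [H]; rw [hγj, hpj]
      · simp only [H]
        rw [hγj, hpj]
        simp only [j, add_sub_cancel_right]
        rw [norm_smul, he, mul_one, Real.norm_of_nonneg h1]
    classical
    let G : V₂ × ℝ → V₂ × ℝ := fun w => if φ w ≤ 0 then H w - w else 0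
    have hG : Continuous G :=
      Continuous.if_le (hH.sub continuous_id) continuous_const hφ continuous_const hbd
    obtain ⟨w, hw⟩ := gmp_surj (W := V₂ × ℝ)
      (Metric.closedBall (0 : V₂) R₂ ×ˢ Set.Icc (0 : ℝ) R₁)
      ((isCompact_closedBall _ _).prod isCompact_Icc) G hG (by
        intro w hw
        apply if_neg
        rw [hφle]
        rintro ⟨h1, h2, h3⟩
        exact hw ⟨by simpa using h3, h1, h2⟩) ((0 : V₂), ρ)
    have hwQ : φ w ≤ 0 := by
      by_contra hneg
      have hG0 : G w = 0 := if_neg hneg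
      rw [hG0, add_zero] at hw
      apply hneg
      rw [hφle, hw]
      exact ⟨hρ.le, hρR₁.le, by simpa using hR₂.le⟩
    have hGw : G w = H w - w := if_pos hwQ
    rw [hGw, add_sub_cancel] at hw
    obtain ⟨h1, h2, h3⟩ := (hφle w).1 hwQ
    have ha : p (γ (j w)) = 0 := congrArg Prod.fst hw
    have hb : ‖γ (j w) - (p (γ (j w)) : V)‖ = ρ := congrArg Prod.snd hw
    rw [ha] at hb
    exact ⟨γ (j w), ⟨j w, ⟨w.2, w.1, w.1.2, h1, h2, h3, rfl⟩, rfl⟩, (hp1 _).1 ha, by simpa using hb⟩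
end

section
/- Let V = V₁ ⊕ ℝe ⊕ V₂ be a real Banach space decomposed as a topological direct sum of closed subspaces with ‖e‖ = 1 (no finite-dimensionality assumption on V₁ or V₂), and let 0 < ρ < R. Set Q = {x ∈ V₁ ⊕ ℝe : ‖x‖ ≤ R} with ∂Q = {x ∈ V₁ ⊕ ℝe : ‖x‖ = R}, and S_ρ = closure(V₂ \ B(0,ρ)) ∪ ((ℝ⁺e ⊕ V₂) ∩ ∂B(0,ρ)). Then S_ρ ∩ ∂Q = ∅, and for every map γ : V → V that is compact (continuous, mapping bounded sets into relatively compact sets), maps closed sets to closed sets, and satisfies γ(x) = x for all x ∈ ∂Q, one has γ(Q) ∩ S_ρ ≠ ∅. -/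
open Set Filter

theorem det_poly_aux {E : Type*} [NormedAddCommGroup E] [NormedSpace ℝ E] [FiniteDimensional ℝ E]
    (A : E →L[ℝ] E) : ∃ p : Polynomial ℝ, p.natDegree ≤ Module.finrank ℝ E ∧
      ∀ t : ℝ, p.eval t = (ContinuousLinearMap.id ℝ E + t • A).det := by
  classical
  let b := Module.finBasis ℝ E
  let M := LinearMap.toMatrix b b (A : E →ₗ[ℝ] E)
  refine ⟨Matrix.det ((Polynomial.X : Polynomial ℝ) • M.map Polynomial.C +
    (1 : Matrix _ _ ℝ).map Polynomial.C), ?_, ?_⟩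
  · simpa using Polynomial.natDegree_det_X_add_C_le M 1
  · intro t
    rw [ContinuousLinearMap.det, ← LinearMap.det_toMatrix b, ← Polynomial.coe_evalRingHom,
      RingHom.map_det]
    congr 1
    ext i j
    simp [M, Matrix.map_apply, Matrix.one_apply]
    split_ifs <;> simp <;> ring

theorem lagrange_aux (n : ℕ) (v : ℕ → ℝ) (hv : Function.Injective v) :
    ∃ L : ℕ → ℝ, (∑ i ∈ Finset.range (n+1), L i = 1) ∧ ∀ p : Polynomial ℝ, p.natDegree ≤ n →
      p.eval 1 = ∑ i ∈ Finset.range (n+1), p.eval (v i) * L i := by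
  refine ⟨fun i => (Lagrange.basis (Finset.range (n+1)) v i).eval 1, ?_, ?_⟩
  · rw [← Polynomial.eval_finsetSum, Lagrange.sum_basis hv.injOn (by simp)]; simp
  · intro p hp
    have h := Lagrange.eq_interpolate (f := p) (s := Finset.range (n+1)) (v := v) hv.injOn (by
      rw [Finset.card_range]
      exact lt_of_le_of_lt Polynomial.degree_le_natDegree (by exact_mod_cast Nat.lt_succ_of_le hp))
    conv_lhs => rw [h]
    simp [Lagrange.interpolate_apply, Polynomial.eval_finsetSum]

theorem det_pos_aux {E : Type*} [NormedAddCommGroup E] [NormedSpace ℝ E] [FiniteDimensional ℝ E]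
    (A : E →L[ℝ] E) (t : ℝ) (ht : 0 ≤ t) (hA : t * ‖A‖ < 1) :
    0 < (ContinuousLinearMap.id ℝ E + t • A).det := by
  have hne : ∀ s ∈ Icc 0 t, (ContinuousLinearMap.id ℝ E + s • A).det ≠ 0 := by
    intro s hs h0
    rw [ContinuousLinearMap.det] at h0
    obtain ⟨x, hx, hx0⟩ := (Submodule.ne_bot_iff _).1 (LinearMap.bot_lt_ker_of_det_eq_zero h0).ne'
    have h1 : x = - (s • A x) := by
      rw [eq_neg_iff_add_eq_zero]; simpa using hx
    have h2 : ‖x‖ ≤ s * (‖A‖ * ‖x‖) := by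
      conv_lhs => rw [h1]
      rw [norm_neg, norm_smul, Real.norm_of_nonneg hs.1]
      exact mul_le_mul_of_nonneg_left (A.le_opNorm x) hs.1
    have h3 : 0 < ‖x‖ := norm_pos_iff.2 hx0
    have h4 : s * ‖A‖ ≤ t * ‖A‖ := mul_le_mul_of_nonneg_right hs.2 (norm_nonneg _)
    nlinarith
  obtain ⟨p, -, hp⟩ := det_poly_aux A
  by_contra hneg
  push Not at hneg
  have hc : ContinuousOn (fun s => p.eval s) (Icc 0 t) := p.continuous.continuousOn
  have := intermediate_value_Icc' ht hc
  obtain ⟨s, hs, hs0⟩ := this (show (0:ℝ) ∈ _ from ⟨by simpa [hp] using hneg, by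
    simp [hp, ContinuousLinearMap.det]⟩)
  exact hne s hs (by rw [← hp]; exact hs0)

theorem no_retraction_aux {E : Type*} [NormedAddCommGroup E] [InnerProductSpace ℝ E]
    [FiniteDimensional ℝ E] (a : ℝ) (ha : 0 < a) (r : E → E) (hr : ContDiff ℝ 1 r)
    (hn : ∀ x, ‖r x‖ = a) (hid : ∀ x, ‖x‖ = a → r x = x) : False := by
  borelize E
  let μ : MeasureTheory.Measure E := MeasureTheory.Measure.addHaar
  let g : E → E := fun x => r x - x
  have hg : ContDiff ℝ 1 g := hr.sub contDiff_id
  have hgd : Differentiable ℝ g := hg.differentiable one_ne_zero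
  have hDc : Continuous (fderiv ℝ g) := hg.continuous_fderiv one_ne_zero
  obtain ⟨C, hC⟩ := (isCompact_closedBall (0:E) a).exists_bound_of_continuousOn hDc.continuousOn
  have hC0 : 0 ≤ C := (norm_nonneg _).trans (hC 0 (by simp [ha.le]))
  have key : ∀ t : ℝ, 0 ≤ t → t ≤ 1 → t * C < 1 →
      ∫ x in Metric.ball (0:E) a, (ContinuousLinearMap.id ℝ E + t • fderiv ℝ g x).det ∂μ
        = μ.real (Metric.ball 0 a) := by
    intro t ht0 ht1 htC
    let f : E → E := fun x => x + t • g x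
    have hfd : ∀ x, HasStrictFDerivAt f (ContinuousLinearMap.id ℝ E + t • fderiv ℝ g x) x := by
      intro x
      exact (hasStrictFDerivAt_id x).add
        ((hg.contDiffAt.hasStrictFDerivAt one_ne_zero).const_smul t)
    have hfc : Continuous f := continuous_id.add (hg.continuous.const_smul t)
    have hpos : ∀ x ∈ Metric.closedBall (0:E) a,
        0 < (ContinuousLinearMap.id ℝ E + t • fderiv ℝ g x).det := fun x hx =>
      det_pos_aux _ t ht0
        (lt_of_le_of_lt (mul_le_mul_of_nonneg_left (hC x hx) ht0) htC)
    have hinj : InjOn f (Metric.closedBall 0 a) := by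
      intro x hx y hy hxy
      have h1 : ‖g x - g y‖ ≤ C * ‖x - y‖ :=
        (convex_closedBall (0:E) a).norm_image_sub_le_of_norm_fderiv_le (𝕜 := ℝ)
          (fun z _ => hgd z) hC hy hx
      have h2 : x - y = - (t • (g x - g y)) := by
        have : x + t • g x = y + t • g y := hxy
        rw [smul_sub, neg_sub, sub_eq_sub_iff_add_eq_add, this, add_comm]
      have h3 : ‖x - y‖ ≤ t * (C * ‖x - y‖) := by
        conv_lhs => rw [h2]
        rw [norm_neg, norm_smul, Real.norm_of_nonneg ht0]
        exact mul_le_mul_of_nonneg_left h1 ht0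
      by_contra hne
      have : 0 < ‖x - y‖ := norm_pos_iff.2 (sub_ne_zero.2 hne)
      nlinarith
    have hsub : f '' Metric.closedBall 0 a ⊆ Metric.closedBall 0 a := by
      rintro _ ⟨x, hx, rfl⟩
      rw [mem_closedBall_zero_iff] at hx ⊢
      have : f x = (1 - t) • x + t • r x := by
        simp only [f, g, smul_sub, sub_smul, one_smul]; abel
      rw [this]
      refine (norm_add_le _ _).trans ?_
      rw [norm_smul, norm_smul, hn, Real.norm_of_nonneg ht0, Real.norm_of_nonneg (by linarith)]
      nlinarith
    have hopen : IsOpen (f '' Metric.ball 0 a) := by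
      rw [isOpen_iff_mem_nhds]
      rintro _ ⟨x, hx, rfl⟩
      have hs : (ContinuousLinearMap.id ℝ E + t • fderiv ℝ g x).range = ⊤ := by
        have hd := (hpos x (Metric.ball_subset_closedBall hx)).ne'
        have hu : IsUnit (LinearMap.det ((ContinuousLinearMap.id ℝ E + t • fderiv ℝ g x : E →L[ℝ] E) : E →ₗ[ℝ] E)) :=
          isUnit_iff_ne_zero.2 hd
        exact LinearMap.range_eq_top.2 ((LinearMap.isUnit_iff_isUnit_det _).2 hu |> (Module.End.isUnit_iff _).1).2
      rw [← (hfd x).map_nhds_eq_of_surj hs]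
      exact image_mem_map (Metric.isOpen_ball.mem_nhds hx)
    have hsub' : f '' Metric.ball 0 a ⊆ Metric.ball 0 a := by
      have h1 : f '' Metric.ball 0 a ⊆ interior (Metric.closedBall 0 a) :=
        hopen.subset_interior_iff.2 ((image_mono Metric.ball_subset_closedBall).trans hsub)
      rwa [interior_closedBall (0:E) ha.ne'] at h1
    have himg : f '' Metric.ball 0 a = Metric.ball 0 a := by
      apply Subset.antisymm hsub'
      · have h00 : f 0 ∈ f '' Metric.ball 0 a := mem_image_of_mem _ (Metric.mem_ball_self ha)
        have h0 : (Metric.ball (0:E) a ∩ f '' Metric.ball 0 a).Nonempty :=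
          ⟨f 0, hsub' h00, h00⟩
        refine (convex_ball (0:E) a).isPreconnected.subset_of_closure_inter_subset hopen h0 ?_
        rintro y ⟨hy1, hy2⟩
        have hcl : IsClosed (f '' Metric.closedBall 0 a) :=
          ((isCompact_closedBall (0:E) a).image hfc).isClosed
        obtain ⟨x, hx, rfl⟩ := closure_minimal (image_mono Metric.ball_subset_closedBall) hcl hy1
        refine ⟨x, ?_, rfl⟩
        rw [mem_ball_zero_iff] at hy2 ⊢
        rw [mem_closedBall_zero_iff] at hx
        refine lt_of_le_of_ne hx fun h => ?_
        have : f x = x := by simp [f, g, hid x h]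
        rw [this] at hy2
        linarith
    have hcv := MeasureTheory.integral_image_eq_integral_abs_det_fderiv_smul μ
      (Metric.isOpen_ball (x := (0:E)) (ε := a)).measurableSet
      (fun x _ => (hfd x).hasFDerivAt.hasFDerivWithinAt)
      (hinj.mono Metric.ball_subset_closedBall) (fun _ => (1:ℝ))
    rw [himg] at hcv
    simp only [smul_eq_mul, mul_one, MeasureTheory.integral_const, MeasureTheory.measureReal_restrict_apply_univ] at hcv
    rw [hcv]
    refine MeasureTheory.setIntegral_congr_fun Metric.isOpen_ball.measurableSet fun x hx => ?_
    exact (abs_of_pos (hpos x (Metric.ball_subset_closedBall hx))).symm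
  have hzero : ∀ x, (ContinuousLinearMap.id ℝ E + (1:ℝ) • fderiv ℝ g x).det = 0 := by
    intro x
    have hrd : HasFDerivAt r (ContinuousLinearMap.id ℝ E + (1:ℝ) • fderiv ℝ g x) x := by
      have := (hasFDerivAt_id x).add (hgd x).hasFDerivAt
      rw [one_smul]
      convert this using 1
      ext y; simp [g]
    by_contra hd
    set L := ContinuousLinearMap.id ℝ E + (1:ℝ) • fderiv ℝ g x
    have hu : IsUnit (LinearMap.det (L : E →ₗ[ℝ] E)) := isUnit_iff_ne_zero.2 hd
    obtain ⟨w, hw⟩ := ((LinearMap.isUnit_iff_isUnit_det _).2 hu |> (Module.End.isUnit_iff _).1).2 (r x)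
    have h1 := (hrd.inner ℝ hrd)
    have h2 : (fun y => inner ℝ (r y) (r y)) = fun _ => a ^ 2 := by
      ext y; rw [real_inner_self_eq_norm_sq, hn]
    rw [h2] at h1
    have h3 := congrArg (fun T => T w) (h1.unique (hasFDerivAt_const _ _))
    have hw' : L w = r x := hw
    simp [hw', hn] at h3
    linarith
  have hintegr : ∀ t : ℝ, MeasureTheory.IntegrableOn
      (fun x => (ContinuousLinearMap.id ℝ E + t • fderiv ℝ g x).det) (Metric.ball 0 a) μ := by
    intro t
    have : Continuous (fun x => (ContinuousLinearMap.id ℝ E + t • fderiv ℝ g x).det) :=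
      ContinuousLinearMap.continuous_det.comp (continuous_const.add (hDc.const_smul t))
    exact (this.continuousOn.integrableOn_compact (isCompact_closedBall (0:E) a)).mono_set
      Metric.ball_subset_closedBall
  let v : ℕ → ℝ := fun i => 1 / ((C + 1) * (i + 1))
  have hv : Function.Injective v := by
    intro i j hij
    simp only [v, one_div, inv_inj] at hij
    have := mul_left_cancel₀ (by positivity) hij
    exact_mod_cast add_right_cancel this
  have hv0 : ∀ i, 0 ≤ v i := fun i => by simp only [v]; positivity
  have hvC : ∀ i, v i ≤ 1 / (C + 1) := fun i => by
    simp only [v]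
    apply one_div_le_one_div_of_le (by positivity)
    have : (0:ℝ) ≤ i := Nat.cast_nonneg i
    nlinarith
  have hv1 : ∀ i, v i ≤ 1 := fun i => (hvC i).trans (by
    rw [div_le_one (by positivity)]; linarith)
  have hv2 : ∀ i, v i * C < 1 := fun i => by
    refine lt_of_le_of_lt (mul_le_mul_of_nonneg_right (hvC i) hC0) ?_
    rw [one_div, inv_mul_lt_iff₀ (by positivity)]; linarith
  obtain ⟨L, hL1, hL⟩ := lagrange_aux (Module.finrank ℝ E) v hv
  have hfin : (0:ℝ) = μ.real (Metric.ball 0 a) := by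
    calc (0:ℝ) = ∫ x in Metric.ball (0:E) a,
          (ContinuousLinearMap.id ℝ E + (1:ℝ) • fderiv ℝ g x).det ∂μ := by
            simp only [hzero, MeasureTheory.integral_zero]
      _ = ∫ x in Metric.ball (0:E) a, ∑ i ∈ Finset.range (Module.finrank ℝ E + 1),
          (ContinuousLinearMap.id ℝ E + v i • fderiv ℝ g x).det * L i ∂μ := by
          congr 1; ext x
          obtain ⟨p, hp, hpe⟩ := det_poly_aux (fderiv ℝ g x)
          simp_rw [← hpe]
          exact hL p hp
      _ = ∑ i ∈ Finset.range (Module.finrank ℝ E + 1), μ.real (Metric.ball 0 a) * L i := by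
          rw [MeasureTheory.integral_finsetSum _ fun i _ => (hintegr (v i)).mul_const (L i)]
          refine Finset.sum_congr rfl fun i _ => ?_
          rw [MeasureTheory.integral_mul_const, key _ (hv0 i) (hv1 i) (hv2 i)]
      _ = μ.real (Metric.ball 0 a) := by rw [← Finset.mul_sum, hL1, mul_one]
  have hposm : 0 < μ.real (Metric.ball (0:E) a) :=
    ENNReal.toReal_pos (Metric.measure_ball_pos μ 0 ha).ne' MeasureTheory.measure_ball_lt_top.ne
  linarith

theorem brouwer_euclidean_aux {E : Type*} [NormedAddCommGroup E] [InnerProductSpace ℝ E]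
    [FiniteDimensional ℝ E] (M : ℝ) (hM : 0 ≤ M) (ψ : E → E) (hψ : Continuous ψ)
    (hb : ∀ x, ‖ψ x‖ ≤ M) : ∃ x, ψ x = x := by
  by_contra! hno
  let χ : E → ℝ := fun x => max 0 (min 1 (M + 1 - ‖x‖))
  have hχc : Continuous χ := by fun_prop
  have hχ0 : ∀ x, 0 ≤ χ x := fun x => le_max_left _ _
  have hχ1 : ∀ x, χ x ≤ 1 := fun x => max_le zero_le_one (min_le_left _ _)
  let H : E → E := fun x => x - χ x • ψ x
  have hHc : Continuous H := by fun_prop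
  have hH0 : ∀ x, H x ≠ 0 := by
    intro x hx
    have hx' : x = χ x • ψ x := sub_eq_zero.1 hx
    by_cases h : ‖x‖ ≤ M
    · have : χ x = 1 := by
        simp only [χ]
        rw [min_eq_left (by linarith)]; simp
      rw [this, one_smul] at hx'
      exact hno x hx'.symm
    · have h1 : ‖x‖ ≤ 1 * M := by
        conv_lhs => rw [hx']
        rw [norm_smul, Real.norm_of_nonneg (hχ0 x)]
        exact mul_le_mul (hχ1 x) (hb x) (norm_nonneg _) zero_le_one
      linarith
  have hHid : ∀ x, M + 1 ≤ ‖x‖ → H x = x := by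
    intro x hx
    have : χ x = 0 := by
      simp only [χ]
      exact max_eq_left ((min_le_right _ _).trans (by linarith))
    simp [H, this]
  obtain ⟨g, hg, hgH, hgS, -⟩ := hHc.exists_contDiff_approx_and_eqOn (ε := fun x => ‖H x‖) 1
    hHc.norm (fun x => norm_pos_iff.2 (hH0 x)) (S := {x | M + 2 ≤ ‖x‖}) (U := {x | M + 1 < ‖x‖})
    (isClosed_le continuous_const continuous_norm)
    ((isOpen_lt continuous_const continuous_norm).mem_nhdsSet.2
      (fun x hx => by simp only [mem_ofPred_eq] at hx ⊢; linarith))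
    (contDiffOn_id.congr fun x hx => hHid x (le_of_lt hx))
  have hg0 : ∀ x, g x ≠ 0 := by
    intro x hx
    have := hgH x
    rw [hx, dist_zero_left] at this
    exact lt_irrefl _ this
  refine no_retraction_aux (M + 2) (by linarith) (fun x => ((M + 2) / ‖g x‖) • g x) ?_ ?_ ?_
  · have h1 : ContDiff ℝ 1 (fun x => ‖g x‖) := (hg.norm ℝ hg0)
    exact (contDiff_const.div h1 fun x => norm_ne_zero_iff.2 (hg0 x)).smul hg
  · intro x
    have := norm_pos_iff.2 (hg0 x)
    rw [norm_smul, Real.norm_of_nonneg (by positivity)]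
    field_simp
  · intro x hx
    have : g x = x := by
      rw [hgS (show M + 2 ≤ ‖x‖ by rw [hx]), hHid x (by linarith)]
    simp only [this, hx]
    rw [div_self (by linarith), one_smul]

theorem brouwer_aux {W : Type*} [NormedAddCommGroup W] [NormedSpace ℝ W]
    [FiniteDimensional ℝ W] (R : ℝ) (hR : 0 ≤ R) (φ : W → W) (hφ : Continuous φ)
    (hb : ∀ x, ‖φ x‖ ≤ R) : ∃ x, φ x = x := by
  let T : W ≃L[ℝ] EuclideanSpace ℝ (Fin (Module.finrank ℝ W)) := toEuclidean
  let T' : W →L[ℝ] EuclideanSpace ℝ (Fin (Module.finrank ℝ W)) := T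
  obtain ⟨y, hy⟩ := brouwer_euclidean_aux (‖T'‖ * R) (by positivity)
    (fun y => T (φ (T.symm y))) (by fun_prop)
    (fun y => (T'.le_opNorm _).trans
      (mul_le_mul_of_nonneg_left (hb _) (norm_nonneg _)))
  exact ⟨T.symm y, T.injective (by simpa using hy)⟩

theorem bohl_aux {W : Type*} [NormedAddCommGroup W] [NormedSpace ℝ W]
    [FiniteDimensional ℝ W] (R : ℝ) (hR : 0 < R) (G : W → W) (hG : Continuous G)
    (hb : ∀ x, ‖x‖ = R → ∀ l : ℝ, 0 < l → G x ≠ -(l • x)) :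
    ∃ x, ‖x‖ ≤ R ∧ G x = 0 := by
  by_contra! hno
  let ret : W → W := fun x => (R / max R ‖x‖) • x
  have hmax : ∀ x : W, 0 < max R ‖x‖ := fun x => lt_max_of_lt_left hR
  have hretc : Continuous ret :=
    (continuous_const.div (by fun_prop) fun x => (hmax x).ne').smul continuous_id
  have hretn : ∀ x, ‖ret x‖ ≤ R := by
    intro x
    have := hmax x
    simp only [ret]
    rw [norm_smul, Real.norm_of_nonneg (by positivity), div_mul_eq_mul_div, div_le_iff₀ this]
    exact mul_le_mul_of_nonneg_left (le_max_right _ _) hR.le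
  have hne : ∀ x, G (ret x) ≠ 0 := fun x => hno _ (hretn x)
  have hnorm : ∀ x, ‖-((R / ‖G (ret x)‖) • G (ret x))‖ = R := by
    intro x
    have := norm_pos_iff.2 (hne x)
    rw [norm_neg, norm_smul, Real.norm_of_nonneg (by positivity)]
    field_simp
  obtain ⟨x, hx⟩ := brouwer_aux R hR.le (fun x => -((R / ‖G (ret x)‖) • G (ret x)))
    ((continuous_const.div (hG.comp hretc).norm fun x => norm_ne_zero_iff.2 (hne x)).smul
      (hG.comp hretc)).neg (fun x => (hnorm x).le)
  have hxR : ‖x‖ = R := by rw [← hnorm x]; exact (congrArg norm hx).symm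
  have hrx : ret x = x := by simp [ret, hxR, hR.ne']
  have hp := norm_pos_iff.2 (hne x)
  simp only [hrx] at hx hp
  refine hb x hxR (‖G x‖ / R) (by positivity) ?_
  have h5 : ∀ l : ℝ, -(l • x) = (l * (R / ‖G x‖)) • G x := by
    intro l
    conv_lhs => rw [← hx]
    rw [smul_neg, neg_neg, smul_smul]
  rw [h5]
  have : ‖G x‖ / R * (R / ‖G x‖) = 1 := by field_simp
  rw [this, one_smul]

theorem decomp_aux {V : Type*} [NormedAddCommGroup V] [NormedSpace ℝ V] [CompleteSpace V]
    (V₁ V₂ : Submodule ℝ V) (e : V) (he : ‖e‖ = 1)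
    (hV₁closed : IsClosed (V₁ : Set V)) (hV₂closed : IsClosed (V₂ : Set V))
    (hinternal : DirectSum.IsInternal ![V₁, ℝ ∙ e, V₂]) :
    ∃ (p : V →L[ℝ] V₁) (s : V →L[ℝ] ℝ) (q : V →L[ℝ] V₂),
      (∀ x, x = (p x : V) + s x • e + q x) ∧
      (∀ (a : V₁) (t : ℝ) (b : V₂), p (a + t • e + b) = a ∧ s (a + t • e + b) = t ∧
        q (a + t • e + b) = b) := by
  have : CompleteSpace V₁ := hV₁closed.completeSpace_coe
  have : CompleteSpace V₂ := hV₂closed.completeSpace_coe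
  let T : (V₁ × ℝ × V₂) →L[ℝ] V :=
    V₁.subtypeL.comp (ContinuousLinearMap.fst ℝ _ _) +
    (((ContinuousLinearMap.fst ℝ _ _).comp (ContinuousLinearMap.snd ℝ _ _)).smulRight e) +
    V₂.subtypeL.comp ((ContinuousLinearMap.snd ℝ _ _).comp (ContinuousLinearMap.snd ℝ _ _))
  have hT : ∀ a t b, T (a, t, b) = (a : V) + t • e + b := fun a t b => by simp [T]
  have hind := hinternal.submodule_iSupIndep
  have htop := hinternal.submodule_iSup_eq_top
  have hle : ∀ i j : Fin 3, j ≠ i → (![V₁, ℝ ∙ e, V₂] j) ≤ ⨆ k, ⨆ (_ : k ≠ i), ![V₁, ℝ ∙ e, V₂] k :=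
    fun i j h => le_iSup₂_of_le j h le_rfl
  have he1 : e ∈ ℝ ∙ e := Submodule.mem_span_singleton_self e
  have hinj : T.ker = ⊥ := by
    rw [LinearMap.ker_eq_bot']
    rintro ⟨a, t, b⟩ h
    have h : (a : V) + t • e + b = 0 := by rw [← hT]; exact h
    have ha : (a : V) = 0 := by
      refine Submodule.disjoint_def.1 (hind 0) _ a.2 ?_
      have : (a : V) = -(t • e + b) := by rw [eq_neg_iff_add_eq_zero, ← add_assoc, h]
      rw [this]
      exact neg_mem (add_mem (hle 0 1 (by decide) (Submodule.smul_mem _ t he1))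
        (hle 0 2 (by decide) b.2))
    have hb : (b : V) = 0 := by
      refine Submodule.disjoint_def.1 (hind 2) _ b.2 ?_
      have : (b : V) = -(t • e) := by
        rw [ha, zero_add] at h; rw [eq_neg_iff_add_eq_zero, add_comm, h]
      rw [this]
      exact neg_mem (hle 2 1 (by decide) (Submodule.smul_mem _ t he1))
    have ht : t = 0 := by
      rw [ha, hb, zero_add, add_zero] at h
      have he0 : e ≠ 0 := by rintro rfl; simp at he
      exact (smul_eq_zero.1 h).resolve_right he0
    ext <;> simp [ha, hb, ht]
  have hsurj : T.range = ⊤ := by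
    rw [eq_top_iff, ← htop]
    refine iSup_le fun i => ?_
    fin_cases i
    · intro x hx
      exact ⟨(⟨x, hx⟩, 0, 0), by simp [T]⟩
    · intro x hx
      obtain ⟨t, rfl⟩ := Submodule.mem_span_singleton.1 hx
      exact ⟨(0, t, 0), by simp [T]⟩
    · intro x hx
      exact ⟨(0, 0, ⟨x, hx⟩), by simp [T]⟩
  let Φ := ContinuousLinearEquiv.ofBijective T hinj hsurj
  let Ψ : V →L[ℝ] (V₁ × ℝ × V₂) := Φ.symm
  refine ⟨(ContinuousLinearMap.fst ℝ _ _).comp Ψ,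
    ((ContinuousLinearMap.fst ℝ _ _).comp (ContinuousLinearMap.snd ℝ _ _)).comp Ψ,
    ((ContinuousLinearMap.snd ℝ _ _).comp (ContinuousLinearMap.snd ℝ _ _)).comp Ψ,
    ?_, ?_⟩
  · intro x
    have := hT (Φ.symm x).1 (Φ.symm x).2.1 (Φ.symm x).2.2
    simp only [ContinuousLinearMap.comp_apply, ContinuousLinearMap.coe_fst',
      ContinuousLinearMap.coe_snd']
    exact (Φ.apply_symm_apply x).symm.trans this
  · intro a t b
    have : Φ.symm (a + t • e + b) = (a, t, b) := by
      rw [← hT]; exact Φ.symm_apply_apply (a, t, b)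
    have : Ψ (a + t • e + b) = (a, t, b) := this
    simp only [ContinuousLinearMap.comp_apply, ContinuousLinearMap.coe_fst',
      ContinuousLinearMap.coe_snd', this, and_self]

/-- **Linking for Silva's geometry with respect to compact, closed maps, without
finite-dimensionality.** Let `V = V₁ ⊕ ℝe ⊕ V₂` be a real Banach space, a
topological direct sum of closed subspaces with `‖e‖ = 1` (no
finite-dimensionality assumption), and `0 < ρ < R`. With
`Q = {x ∈ V₁ ⊕ ℝe : ‖x‖ ≤ R}`, `bQ = {x ∈ V₁ ⊕ ℝe : ‖x‖ = R}` and
`S_ρ = closure (V₂ \ B(0,ρ)) ∪ ((ℝ⁺e ⊕ V₂) ∩ ∂B(0,ρ))`, one has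
`S_ρ ∩ bQ = ∅`, and every map `γ : V → V` that is compact (continuous, sending
bounded sets to relatively compact sets), maps closed sets onto closed sets and
fixes `bQ` pointwise satisfies `γ(Q) ∩ S_ρ ≠ ∅`. -/
theorem silva_geometry_links_compact_maps
    {V : Type*} [NormedAddCommGroup V] [NormedSpace ℝ V] [CompleteSpace V]
    (V₁ V₂ : Submodule ℝ V) (e : V) (he : ‖e‖ = 1)
    (hV₁closed : IsClosed (V₁ : Set V)) (hV₂closed : IsClosed (V₂ : Set V))
    -- `V = V₁ ⊕ ℝe ⊕ V₂` (internal topological direct sum of closed subspaces)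
    (hinternal : DirectSum.IsInternal ![V₁, ℝ ∙ e, V₂])
    (ρ R : ℝ) (hρ : 0 < ρ) (hρR : ρ < R) :
    ((closure ((V₂ : Set V) \ Metric.ball 0 ρ) ∪
        ({ x : V | ∃ s : ℝ, 0 ≤ s ∧ ∃ v ∈ V₂, x = s • e + v } ∩
          Metric.sphere 0 ρ)) ∩
      { x : V | x ∈ V₁ ⊔ (ℝ ∙ e) ∧ ‖x‖ = R } = ∅) ∧
    ∀ γ : V → V, Continuous γ →
      (∀ B : Set V, Bornology.IsBounded B → IsCompact (closure (γ '' B))) →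
      (∀ C : Set V, IsClosed C → IsClosed (γ '' C)) →
      (∀ x ∈ { x : V | x ∈ V₁ ⊔ (ℝ ∙ e) ∧ ‖x‖ = R }, γ x = x) →
      (γ '' { x : V | x ∈ V₁ ⊔ (ℝ ∙ e) ∧ ‖x‖ ≤ R } ∩
        (closure ((V₂ : Set V) \ Metric.ball 0 ρ) ∪
          ({ x : V | ∃ s : ℝ, 0 ≤ s ∧ ∃ v ∈ V₂, x = s • e + v } ∩
            Metric.sphere 0 ρ))).Nonempty := by
  obtain ⟨p, s, q, hdec, hcoord⟩ := decomp_aux V₁ V₂ e he hV₁closed hV₂closed hinternal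
  have hR : 0 < R := hρ.trans hρR
  set W : Submodule ℝ V := V₁ ⊔ (ℝ ∙ e) with hWdef
  have heW : e ∈ W := Submodule.mem_sup_right (Submodule.mem_span_singleton_self e)
  have hV₁W : ∀ a : V₁, (a : V) ∈ W := fun a => Submodule.mem_sup_left a.2
  have hqW : ∀ x ∈ W, q x = 0 := by
    intro x hx
    obtain ⟨a, ha, y, hy, rfl⟩ := Submodule.mem_sup.1 hx
    obtain ⟨t, rfl⟩ := Submodule.mem_span_singleton.1 hy
    have := (hcoord ⟨a, ha⟩ t 0).2.2
    simpa using this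
  have hWq : ∀ x, q x = 0 → x ∈ W := by
    intro x hx
    rw [hdec x, hx, Submodule.coe_zero, add_zero]
    exact add_mem (hV₁W _) (Submodule.smul_mem _ _ heW)
  have hWclosed : IsClosed (W : Set V) := by
    have : (W : Set V) = q ⁻¹' {0} := by
      ext x; exact ⟨hqW x, hWq x⟩
    rw [this]
    exact isClosed_singleton.preimage q.continuous
  constructor
  · rw [eq_empty_iff_forall_notMem]
    rintro x ⟨hx | hx, hxW, hxR⟩
    · have hx2 : x ∈ (V₂ : Set V) := closure_minimal sdiff_subset hV₂closed hx
      have h1 := (hcoord 0 0 ⟨x, hx2⟩).2.2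
      simp only [Submodule.coe_zero, zero_smul, zero_add] at h1
      rw [hqW x hxW] at h1
      have : x = 0 := (congrArg Subtype.val h1).symm
      rw [this, norm_zero] at hxR
      linarith
    · have := mem_sphere_zero_iff_norm.1 hx.2
      linarith
  · intro γ hγ hcomp _ hfix
    -- finite-dimensionality of `W`
    have hfd : FiniteDimensional ℝ W := by
      let K : Set V := { x : V | x ∈ W ∧ ‖x‖ = R }
      have hKb : Bornology.IsBounded K :=
        Metric.isBounded_closedBall.subset (s := K) (t := Metric.closedBall (0:V) R)
          fun x hx => mem_closedBall_zero_iff.2 hx.2.le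
      have hK : IsCompact (closure K) := by
        have h1 := hcomp K hKb
        have h2 : γ '' K = K := by
          rw [image_congr hfix, image_id']
        rwa [h2] at h1
      have hD : IsCompact ((fun z : ℝ × V => z.1 • z.2) '' (Icc (0:ℝ) 1 ×ˢ closure K)) :=
        (isCompact_Icc.prod hK).image (by fun_prop)
      have hemb : Topology.IsClosedEmbedding (Subtype.val : W → V) :=
        hWclosed.isClosedEmbedding_subtypeVal
      refine FiniteDimensional.of_isCompact_closedBall₀ ℝ hR
        ((hemb.isCompact_preimage hD).of_isClosed_subset Metric.isClosed_closedBall ?_)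
      intro x hx
      rw [mem_closedBall_zero_iff] at hx
      by_cases hx0 : x = 0
      · refine ⟨(0, R • e), ⟨by simp, subset_closure ⟨Submodule.smul_mem _ _ heW, ?_⟩⟩, ?_⟩
        · rw [norm_smul, he, mul_one, Real.norm_of_nonneg hR.le]
        · simp [hx0]
      · have hxp : 0 < ‖x‖ := norm_pos_iff.2 hx0
        refine ⟨(‖x‖ / R, (R / ‖x‖) • (x : V)), ⟨⟨by positivity, ?_⟩,
          subset_closure ⟨Submodule.smul_mem _ _ x.2, ?_⟩⟩, ?_⟩
        · rw [div_le_one hR]; exact hx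
        · rw [norm_smul, Real.norm_of_nonneg (by positivity), ← Submodule.coe_norm]
          field_simp
        · have : ‖x‖ / R * (R / ‖x‖) = 1 := by field_simp
          simp only [smul_smul, this, one_smul]
    let c : V → ℝ := fun y => min (s y) (‖s y • e + (q y : V)‖ - ρ)
    have hc : Continuous c := by fun_prop
    let eW : W := ⟨e, heW⟩
    let G : W → W := fun x => ⟨(p (γ x) : V), hV₁W _⟩ + c (γ x) • eW
    have hGc : Continuous G := by
      have h1 : Continuous fun x : W => (⟨(p (γ x) : V), hV₁W _⟩ : W) :=
        Continuous.subtype_mk (by fun_prop) _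
      have h2 : Continuous fun x : W => c (γ x) := by fun_prop
      exact h1.add (h2.smul continuous_const)
    have hGcoe : ∀ x, (G x : V) = (p (γ x) : V) + c (γ x) • e + ((0 : V₂) : V) := fun x => by
      simp [G, eW]
    obtain ⟨x, hxR, hx0⟩ := bohl_aux R hR G hGc (by
      intro x hx l hl hGx
      have hγx : γ x = x := hfix _ ⟨x.2, hx⟩
      have h1 := congrArg Subtype.val hGx
      rw [hGcoe, hγx] at h1
      obtain ⟨h2, h3, -⟩ := hcoord (p x) (c x) 0
      rw [h1] at h2 h3
      simp only [Submodule.coe_neg, Submodule.coe_smul, map_neg, map_smul] at h2 h3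
      have hp0 : (1 + l) • p x = 0 := by
        rw [add_smul, one_smul]
        nth_rewrite 1 [← h2]
        simp
      have hp0 : p x = 0 := (smul_eq_zero.1 hp0).resolve_left (by positivity)
      have hq0 : q x = 0 := hqW _ x.2
      have hxe : (x : V) = s x • e := by
        conv_lhs => rw [hdec x]
        simp [hp0, hq0]
      have hs : |s x| = R := by
        rw [← hx, Submodule.coe_norm]
        conv_rhs => rw [hxe]
        rw [norm_smul, he, mul_one, Real.norm_eq_abs]
      have hcx : c x = min (s x) (R - ρ) := by
        simp only [c]
        rw [hq0, Submodule.coe_zero, add_zero, norm_smul, he, mul_one, Real.norm_eq_abs, hs]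
      rw [hcx, smul_eq_mul] at h3
      rcases abs_choice (s x) with h | h
      · have hsx : s x = R := by rw [← h, hs]
        rw [hsx, min_eq_right (by linarith)] at h3
        have : 0 < l * R := by positivity
        linarith
      · have hsx : s x = -R := by rw [← hs, h, neg_neg]
        rw [hsx, min_eq_left (by linarith)] at h3
        have : 0 < l * R := by positivity
        linarith)
    refine ⟨γ x, ⟨x, ⟨x.2, hxR⟩, rfl⟩, ?_⟩
    have h1 := hGcoe x
    rw [hx0, Submodule.coe_zero] at h1
    obtain ⟨h2, h3, -⟩ := hcoord (p (γ x)) (c (γ x)) 0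
    rw [← h1, map_zero] at h2 h3
    have hy : γ x = s (γ x) • e + (q (γ x) : V) := by
      conv_lhs => rw [hdec (γ x)]
      rw [← h2, Submodule.coe_zero, zero_add]
    have hcy : min (s (γ x)) (‖γ x‖ - ρ) = 0 := by
      have : c (γ x) = min (s (γ x)) (‖γ x‖ - ρ) := by
        simp only [c]; rw [← hy]
      rw [← this, ← h3]
    rcases min_choice (s (γ x)) (‖γ x‖ - ρ) with h | h
    · left
      have hs0 : s (γ x) = 0 := by rw [← h, hcy]
      have hn : 0 ≤ ‖γ x‖ - ρ := by rw [← hcy]; exact min_le_right _ _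
      apply subset_closure
      refine ⟨?_, fun hb => ?_⟩
      · rw [hy, hs0, zero_smul, zero_add]
        exact (q (γ x)).2
      · rw [mem_ball_zero_iff] at hb
        linarith
    · right
      have hn : ‖γ x‖ - ρ = 0 := by rw [← h, hcy]
      have hs0 : 0 ≤ s (γ x) := by rw [← hcy]; exact min_le_left _ _
      refine ⟨⟨s (γ x), hs0, q (γ x), (q (γ x)).2, hy⟩, ?_⟩
      rw [mem_sphere_zero_iff_norm]
      linarith
end

section
/- Let K be a compact metric space, E = C(K, ℝ) the Banach space of continuous real functions on K with the supremum norm, and θ : E → ℝ defined by θ(x) = max{x(t) : t ∈ K}. Then θ is convex and continuous, and a continuous linear functional μ ∈ E* belongs to the subdifferential ∂θ(x) = {μ ∈ E* : θ(y) ≥ θ(x) + μ(y − x) for all y ∈ E} if and only if μ is positive (μ(z) ≥ 0 whenever z ≥ 0 pointwise), has mass one (μ(𝟙) = 1 where 𝟙 is the constant function 1), and, viewed via the Riesz representation as a regular Borel measure on K, its support is contained in the set {t ∈ K : x(t) = θ(x)}. -/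
open Set Filter

/-- **Subdifferential of the max functional on `C(K, ℝ)`.**
Let `K` be a compact metric space, `E = C(K, ℝ)` with the sup norm, and
`θ x = max_{t ∈ K} x t`. Then `θ` is convex and continuous, and
`μ ∈ ∂θ(x) = {μ ∈ E* : θ y ≥ θ x + μ (y - x) for all y}` if and only if `μ` is
positive, has mass one (`μ 𝟙 = 1`), and, as a regular Borel measure on `K`,
has support contained in `{t : x t = θ x}` — the latter expressed by `μ`
vanishing on every `z ∈ E` whose (closed) support misses `{t : x t = θ x}`. -/
theorem subdifferential_of_max_functional
    {K : Type*} [MetricSpace K] [CompactSpace K] [Nonempty K] :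
    ConvexOn ℝ Set.univ (fun x : C(K, ℝ) => ⨆ t : K, x t) ∧
    Continuous (fun x : C(K, ℝ) => ⨆ t : K, x t) ∧
    ∀ (x : C(K, ℝ)) (μ : C(K, ℝ) →L[ℝ] ℝ),
      (∀ y : C(K, ℝ), (⨆ t : K, x t) + μ (y - x) ≤ ⨆ t : K, y t) ↔
        ((∀ z : C(K, ℝ), (∀ t : K, 0 ≤ z t) → 0 ≤ μ z) ∧
         μ 1 = 1 ∧
         ∀ z : C(K, ℝ),
           tsupport (⇑z) ∩ { t : K | x t = ⨆ s : K, x s } = ∅ → μ z = 0) := by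
  have bdd : ∀ x : C(K, ℝ), BddAbove (Set.range fun t : K => x t) := fun x =>
    (isCompact_range x.continuous).bddAbove
  have le_sup : ∀ (x : C(K, ℝ)) (t : K), x t ≤ ⨆ s : K, x s := fun x t => le_ciSup (bdd x) t
  refine ⟨⟨convex_univ, ?_⟩, ?_, ?_⟩
  · intro x _ y _ a b ha hb _
    refine ciSup_le fun t => ?_
    have h1 := mul_le_mul_of_nonneg_left (le_sup x t) ha
    have h2 := mul_le_mul_of_nonneg_left (le_sup y t) hb
    simp only [ContinuousMap.add_apply, ContinuousMap.smul_apply, smul_eq_mul]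
    linarith
  · refine (LipschitzWith.of_le_add fun x y => ?_).continuous
    refine ciSup_le fun t => ?_
    have h1 := le_sup y t
    have h2 := ContinuousMap.dist_apply_le_dist (f := x) (g := y) t
    rw [Real.dist_eq] at h2
    have h3 := le_abs_self (x t - y t)
    linarith
  · intro x μ
    set T : ℝ := ⨆ t : K, x t with hT
    -- the gap function
    set g : C(K, ℝ) := T • (1 : C(K, ℝ)) - x with hg
    have g_apply : ∀ t, g t = T - x t := fun t => by simp [hg]
    have g_nonneg : ∀ t, 0 ≤ g t := fun t => by
      rw [g_apply]
      have := le_sup x t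
      linarith
    have μg : μ g = T * μ 1 - μ x := by simp [hg]
    constructor
    · intro h
      have pos : ∀ z : C(K, ℝ), (∀ t : K, 0 ≤ z t) → 0 ≤ μ z := by
        intro z hz
        have h1 := h (x - z)
        have h2 : (⨆ t : K, (x - z) t) ≤ T := ciSup_le fun t => by
          have := le_sup x t
          have := hz t
          simp only [ContinuousMap.sub_apply]
          linarith
        have h3 : μ (x - z - x) = - μ z := by simp
        linarith
      have one : μ 1 = 1 := by
        have h1 := h (x + 1)
        have h2 := h (x - 1)
        have h3 : (⨆ t : K, (x + 1) t) ≤ T + 1 := ciSup_le fun t => by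
          have := le_sup x t
          simp only [ContinuousMap.add_apply, ContinuousMap.one_apply]
          linarith
        have h4 : (⨆ t : K, (x - 1) t) ≤ T - 1 := ciSup_le fun t => by
          have := le_sup x t
          simp only [ContinuousMap.sub_apply, ContinuousMap.one_apply]
          linarith
        have h5 : μ (x + 1 - x) = μ 1 := by simp
        have h6 : μ (x - 1 - x) = - μ 1 := by simp
        linarith
      refine ⟨pos, one, fun z hz => ?_⟩
      have hg0 : μ g ≤ 0 := by
        have h1 := h 0
        have h2 : (⨆ t : K, (0 : C(K, ℝ)) t) = 0 := by simp
        have h3 : μ (0 - x) = - μ x := by simp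
        rw [μg, one]
        linarith
      have hC : ∃ C : ℝ, 0 ≤ C ∧ ∀ t, |z t| ≤ C * g t := by
        have hc : IsCompact (tsupport (⇑z)) := (isClosed_tsupport _).isCompact
        rcases (tsupport (⇑z)).eq_empty_or_nonempty with he | hne
        · refine ⟨0, le_rfl, fun t => ?_⟩
          have : z t = 0 := image_eq_zero_of_notMem_tsupport (by simp [he])
          simp [this]
        · obtain ⟨t0, ht0, hmin⟩ := hc.exists_isMinOn hne g.continuous.continuousOn
          have hpos : 0 < g t0 := by
            refine lt_of_le_of_ne (g_nonneg t0) fun h0 => ?_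
            have : t0 ∈ tsupport (⇑z) ∩ { t : K | x t = T } := by
              refine ⟨ht0, ?_⟩
              rw [g_apply] at h0
              show x t0 = T
              linarith
            rw [hz] at this
            exact this
          refine ⟨‖z‖ / g t0, by positivity, fun t => ?_⟩
          by_cases ht : t ∈ tsupport (⇑z)
          · have h1 : g t0 ≤ g t := hmin ht
            have h2 : |z t| ≤ ‖z‖ := z.norm_coe_le_norm t
            calc |z t| ≤ ‖z‖ := h2
              _ = ‖z‖ / g t0 * g t0 := by field_simp
              _ ≤ ‖z‖ / g t0 * g t := by gcongr
          · rw [image_eq_zero_of_notMem_tsupport ht, abs_zero]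
            have := g_nonneg t
            positivity
      obtain ⟨C, hC0, hC⟩ := hC
      have h1 := pos (C • g - z) fun t => by
        have := (abs_le.1 (hC t)).2
        simp only [ContinuousMap.sub_apply, ContinuousMap.smul_apply, smul_eq_mul]
        linarith
      have h2 := pos (C • g + z) fun t => by
        have := (abs_le.1 (hC t)).1
        simp only [ContinuousMap.add_apply, ContinuousMap.smul_apply, smul_eq_mul]
        linarith
      simp only [map_sub, map_add, map_smul, smul_eq_mul] at h1 h2
      have h3 := mul_nonpos_of_nonneg_of_nonpos hC0 hg0
      linarith
    · rintro ⟨pos, one, supp⟩ y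
      have hgle : μ g ≤ 0 := by
        refine le_of_forall_pos_le_add fun ε hε => ?_
        set z : C(K, ℝ) := ⟨fun t => max (g t - ε) 0, by fun_prop⟩ with hz
        have z_apply : ∀ t, z t = max (g t - ε) 0 := fun t => rfl
        have hz0 : μ z = 0 := by
          apply supp
          have hsub : tsupport (⇑z) ⊆ {t | ε ≤ g t} := by
            refine closure_minimal (fun t ht => ?_) (isClosed_le continuous_const g.continuous)
            by_contra hlt
            apply ht
            have hlt' : g t < ε := not_le.1 hlt
            rw [z_apply]
            exact max_eq_right (by linarith)
          refine Set.eq_empty_iff_forall_notMem.2 fun t ht => ?_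
          have h1 : ε ≤ g t := hsub ht.1
          have h2 : x t = T := ht.2
          rw [g_apply] at h1
          linarith
        have h1 := pos (z + ε • (1 : C(K, ℝ)) - g) fun t => by
          have := le_max_left (g t - ε) 0
          simp only [ContinuousMap.sub_apply, ContinuousMap.add_apply, ContinuousMap.smul_apply,
            ContinuousMap.one_apply, smul_eq_mul, z_apply]
          linarith
        simp only [map_sub, map_add, map_smul, smul_eq_mul, one, hz0] at h1
        linarith
      have hy := pos ((⨆ t : K, y t) • (1 : C(K, ℝ)) - y) fun t => by
        have := le_sup y t
        simp only [ContinuousMap.sub_apply, ContinuousMap.smul_apply,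
            ContinuousMap.one_apply, smul_eq_mul]
        linarith
      simp only [map_sub, map_smul, smul_eq_mul, one] at hy
      rw [μg, one] at hgle
      rw [map_sub]
      linarith
end
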